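/- Let u, v, f : ℝ¹⁶ → ℝ be C^∞-smooth functions, at least one of which has compact support. Then ∫_{ℝ¹⁶} det(Hess_𝕆(u), Hess_𝕆(v))·f dx = −(1/2)·∫_{ℝ¹⁶} Re( f₁·(v_{2̄2}·u_{1̄}) − f₁·(v_{1̄2}·u_{2̄}) − f₂·(v_{2̄1}·u_{1̄}) + f₂·(v_{1̄1}·u_{2̄}) ) dx, where f_i := Σ_{p=0}^{7} (∂f/∂x_i^p)·conj(e_p) and u_{ī} := Σ_{p=0}^{7} e_p·(∂u/∂x_i^p). (Proposition 10.3, integration by parts in 𝕆².) -/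

import Mathlib

noncomputable section

open scoped Quaternion

/-- The octonions, realized as pairs of quaternions (Cayley–Dickson). -/
abbrev Oct : Type := ℍ[ℝ] × ℍ[ℝ]

/-- Octonionic multiplication: (x,y)·(w,z) = (xw − z̄y, zx + yw̄). -/
def omul (a b : Oct) : Oct :=
  (a.1 * b.1 - star b.2 * a.2, b.2 * a.1 + a.2 * star b.1)

/-- Octonionic conjugation. -/
def oconj (a : Oct) : Oct := (star a.1, -a.2)

/-- Real part of an octonion. -/
def oRe (a : Oct) : ℝ := a.1.re

/-- Squared norm |q|² = Re(q·q̄). -/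
def onSq (a : Oct) : ℝ := oRe (omul a (oconj a))

/-- Octonionic Hermitian 2×2 matrix: (α, β, q) represents [[α, q],[q̄, β]]. -/
abbrev Herm : Type := ℝ × ℝ × Oct

/-- Determinant of an octonionic Hermitian 2×2 matrix. -/
def detH (A : Herm) : ℝ := A.1 * A.2.1 - onSq A.2.2

/-- The quadratic form ξ ↦ Re(ξ*Aξ). -/
def qform (A : Herm) (ξ : Oct × Oct) : ℝ :=
  A.1 * onSq ξ.1 + A.2.1 * onSq ξ.2 + 2 * oRe (omul (oconj ξ.1) (omul A.2.2 ξ.2))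

/-- Positive definiteness. -/
def PosDefH (A : Herm) : Prop := ∀ ξ : Oct × Oct, ξ ≠ 0 → 0 < qform A ξ

/-- Nonnegative definiteness. -/
def NonnegDefH (A : Herm) : Prop := ∀ ξ : Oct × Oct, 0 ≤ qform A ξ

/-- The point space ℝ¹⁶, with coordinates x_i^p, i = 1,2 and p = 0,…,7. -/
abbrev Pt : Type := Fin 2 → Fin 8 → ℝ

def qI : ℍ[ℝ] := ⟨0, 1, 0, 0⟩
def qJ : ℍ[ℝ] := ⟨0, 0, 1, 0⟩
def qK : ℍ[ℝ] := ⟨0, 0, 0, 1⟩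

/-- The standard real basis e₀ = 1, e₁, …, e₇ of the octonions. -/
def e : Fin 8 → Oct :=
  ![((1 : ℍ[ℝ]), 0), (qI, 0), (qJ, 0), (qK, 0),
    (0, (1 : ℍ[ℝ])), (0, qI), (0, qJ), (0, qK)]

/-- The coordinate unit vector of the coordinate x_i^p. -/
def uvec (i : Fin 2) (p : Fin 8) : Pt := Pi.single i (Pi.single p 1)

/-- Partial derivative ∂f/∂x_i^p of a real-valued function on ℝ¹⁶. -/
def pd (i : Fin 2) (p : Fin 8) (f : Pt → ℝ) : Pt → ℝ :=
  fun x => fderiv ℝ f x (uvec i p)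

/-- The entry f_{ī j} = Σ_{p,q} e_p·(∂²f/∂x_i^p∂x_j^q)·conj(e_q) of the octonionic Hessian. -/
def hessEntry (f : Pt → ℝ) (i j : Fin 2) (x : Pt) : Oct :=
  ∑ p, ∑ q, pd i p (pd j q f) x • omul (e p) (oconj (e q))

/-- The Laplacian Δᵢ = Σ_p ∂²/∂(x_i^p)² in the i-th octonionic variable. -/
def lap (i : Fin 2) (f : Pt → ℝ) (x : Pt) : ℝ := ∑ p, pd i p (pd i p f) x

/-- The identification ℝ¹⁶ ≅ 𝕆². -/
def toO2 (x : Pt) : Oct × Oct := (∑ p, x 0 p • e p, ∑ p, x 1 p • e p)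

open MeasureTheory

/-- u_{ī} := Σ_p e_p · ∂u/∂x_i^p. -/
def dbar (i : Fin 2) (u : Pt → ℝ) (x : Pt) : Oct := ∑ p, pd i p u x • e p

/-- f_i := Σ_p ∂f/∂x_i^p · conj(e_p). -/
def dlow (i : Fin 2) (f : Pt → ℝ) (x : Pt) : Oct := ∑ p, pd i p f x • oconj (e p)

/-- The mixed determinant det(Hess_𝕆(u), Hess_𝕆(v)) at a point. -/
def mdetHess (u v : Pt → ℝ) (x : Pt) : ℝ :=
  (1 / 2) * (oRe (hessEntry u 0 0 x) * oRe (hessEntry v 1 1 x)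
      + oRe (hessEntry v 0 0 x) * oRe (hessEntry u 1 1 x)
      - 2 * oRe (omul (hessEntry u 0 1 x) (oconj (hessEntry v 0 1 x))))

/-!
Let `W_i = v_{j̄j}·u_ī - v_{īj}·u_j̄` with `j ≠ i`. The right-hand side pairs the gradient of `f`
with `(W₀, W₁)`, so integrating by parts reduces the formula to
`div W₀ + div W₁ = 2 det(Hess u, Hess v)`. Here `div` is the real part of the operator
`D_i F = Σ_p ē_p · ∂F/∂x_i^p`, and since `Re((ab)c) = Re(a(bc))` and `Re(ab) = Re(ba)`,
`Re D_i(F·u_j̄) = Re((D_i F)·u_j̄) + Re(F·u_{j̄i})`.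
The terms without derivatives of `F` add up to twice the mixed determinant. The others cancel
because `D_i v_{īj} = D_j v_{īi}`: by `ā(bc) + b̄(ac) = 2 Re(a b̄) c` and the symmetry of second
derivatives, both sides are `Σ_q (Δ_i ∂v/∂x_j^q) ē_q`.
-/

section OctonionAlgebra

/-- Octonionic multiplication as a continuous `ℝ`-bilinear map, so that sums and derivatives can be
taken inside products. -/
def omulL : Oct →L[ℝ] Oct →L[ℝ] Oct :=
  LinearMap.toContinuousBilinearMap <| LinearMap.mk₂ ℝ omul
    (fun a b c => by ext <;> simp [omul] <;> ring)
    (fun t a b => by ext <;> simp [omul] <;> ring)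
    (fun a b c => by ext <;> simp [omul] <;> ring)
    (fun t a b => by ext <;> simp [omul] <;> ring)

/-- The real part of an octonion as a continuous linear form. -/
def oReL : Oct →L[ℝ] ℝ :=
  LinearMap.toContinuousLinearMap
    { toFun := oRe
      map_add' := fun a b => by simp [oRe]
      map_smul' := fun t a => by simp [oRe] }

/-- Octonionic conjugation as a linear map. -/
def oconjL : Oct →ₗ[ℝ] Oct where
  toFun := oconj
  map_add' a b := by simp [oconj, add_comm]
  map_smul' t a := by simp [oconj]

variable {ι : Type*} (s : Finset ι) (t : ℝ) (a b c : Oct) (A : ι → Oct)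

theorem omulL_apply : omulL a b = omul a b := rfl

theorem oRe_add : oRe (a + b) = oRe a + oRe b := map_add oReL a b

theorem oRe_sub : oRe (a - b) = oRe a - oRe b := map_sub oReL a b

theorem oRe_smul : oRe (t • a) = t * oRe a := map_smul oReL t a

theorem oRe_sum : oRe (∑ i ∈ s, A i) = ∑ i ∈ s, oRe (A i) := map_sum oReL A s

theorem oconj_smul : oconj (t • a) = t • oconj a := map_smul oconjL t a

theorem oconj_sum : oconj (∑ i ∈ s, A i) = ∑ i ∈ s, oconj (A i) := map_sum oconjL A s

theorem zero_omul : omul 0 b = 0 := omulL.map_zero₂ b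

theorem omul_zero : omul a 0 = 0 := map_zero (omulL a)

theorem omul_add : omul a (b + c) = omul a b + omul a c := map_add (omulL a) b c

theorem omul_sub : omul a (b - c) = omul a b - omul a c := map_sub (omulL a) b c

theorem smul_omul : omul (t • a) b = t • omul a b := omulL.map_smul₂ t a b

theorem omul_smul : omul a (t • b) = t • omul a b := map_smul (omulL a) t b

theorem sum_omul : omul (∑ i ∈ s, A i) b = ∑ i ∈ s, omul (A i) b := by
  simp only [← omulL_apply, map_sum, sum_apply]

theorem omul_sum : omul a (∑ i ∈ s, A i) = ∑ i ∈ s, omul a (A i) := map_sum (omulL a) A s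

theorem omul_e_zero : omul a (e 0) = a := by
  ext <;> simp [omul, e]

theorem oRe_e_zero : oRe (e 0) = 1 := by
  simp [oRe, e]

theorem oRe_oconj : oRe (oconj a) = oRe a := by
  simp [oRe, oconj]

theorem oconj_oconj : oconj (oconj a) = a := by
  simp [oconj]

theorem oconj_omul : oconj (omul a b) = omul (oconj b) (oconj a) := by
  ext <;> simp [omul, oconj, add_comm]

theorem oRe_omul_comm : oRe (omul a b) = oRe (omul b a) := by
  simp [omul, oRe]; ring

theorem oRe_omul_assoc : oRe (omul (omul a b) c) = oRe (omul a (omul b c)) := by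
  simp [omul, oRe]; ring

theorem oRe_omul_oconj : oRe (omul a (oconj b))
    = a.1.re * b.1.re + a.1.imI * b.1.imI + a.1.imJ * b.1.imJ + a.1.imK * b.1.imK
      + a.2.re * b.2.re + a.2.imI * b.2.imI + a.2.imJ * b.2.imJ + a.2.imK * b.2.imK := by
  simp [omul, oconj, oRe]; ring

theorem omul_oconj_add_omul_oconj :
    omul a (oconj b) + omul b (oconj a) = (2 * oRe (omul a (oconj b))) • e 0 := by
  rw [oRe_omul_oconj]
  ext <;> simp [omul, oconj, e] <;> ring

-- The polarization of `ā(ac) = |a|²c`, which is what alternativity provides without associativity.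
theorem oconj_omul_omul_add_oconj_omul_omul :
    omul (oconj a) (omul b c) + omul (oconj b) (omul a c) = (2 * oRe (omul a (oconj b))) • c := by
  rw [oRe_omul_oconj]
  simp only [omul, oconj, Prod.mk_add_mk, Prod.ext_iff, Prod.smul_fst, Prod.smul_snd, star_add,
    star_sub, star_mul, star_star]
  constructor <;> ext <;> simp <;> ring

theorem oRe_e_omul_oconj_e (p q : Fin 8) :
    oRe (omul (e p) (oconj (e q))) = if p = q then 1 else 0 := by
  rw [oRe_omul_oconj]
  fin_cases p <;> fin_cases q <;> simp [e, qI, qJ, qK]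

end OctonionAlgebra

theorem sum_sum_smul_of_symm {K E ι : Type*} [Field K] [NeZero (2 : K)] [AddCommGroup E]
    [Module K E] [Fintype ι] [DecidableEq ι] {H : ι → ι → K} {T : ι → ι → E} {c : E}
    (hH : ∀ p q, H p q = H q p) (hT : ∀ p q, T p q + T q p = if p = q then (2 : K) • c else 0) :
    ∑ p, ∑ q, H p q • T p q = (∑ p, H p p) • c := by
  have hswap : ∑ p, ∑ q, H p q • T p q = ∑ p, ∑ q, H p q • T q p := by
    rw [Finset.sum_comm]
    exact Finset.sum_congr rfl fun p _ => Finset.sum_congr rfl fun q _ => by rw [hH]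
  refine smul_right_injective E (two_ne_zero (α := K)) ?_
  calc (2 : K) • ∑ p, ∑ q, H p q • T p q
      = ∑ p, ∑ q, H p q • (T p q + T q p) := by
        simp only [two_smul, smul_add, Finset.sum_add_distrib, ← hswap]
    _ = (2 : K) • (∑ p, H p p) • c := by
        simp [hT, smul_comm _ (2 : K), Finset.sum_smul, Finset.smul_sum]

theorem sum_sum_smul_e_omul_oconj_e {H : Fin 8 → Fin 8 → ℝ} (hH : ∀ p q, H p q = H q p) :
    ∑ p, ∑ q, H p q • omul (e p) (oconj (e q)) = (∑ p, H p p) • e 0 :=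
  sum_sum_smul_of_symm hH fun p q => by
    rw [omul_oconj_add_omul_oconj, oRe_e_omul_oconj_e]; split_ifs <;> simp

theorem sum_sum_smul_oconj_e_omul_e_omul {H : Fin 8 → Fin 8 → ℝ} (hH : ∀ p q, H p q = H q p)
    (a : Oct) : ∑ p, ∑ q, H p q • omul (oconj (e p)) (omul (e q) a) = (∑ p, H p p) • a :=
  sum_sum_smul_of_symm hH fun p q => by
    rw [oconj_omul_omul_add_oconj_omul_omul, oRe_e_omul_oconj_e]; split_ifs <;> simp

section OctonionCalculus

theorem hasCompactSupport_omul {X : Type*} [TopologicalSpace X] {F G : X → Oct}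
    (hFG : HasCompactSupport F ∨ HasCompactSupport G) :
    HasCompactSupport (fun y => omul (F y) (G y)) :=
  hFG.elim
    (fun hF => hF.mono fun _ => mt fun h => by simp only [h, zero_omul])
    (fun hG => hG.mono fun _ => mt fun h => by simp only [h, omul_zero])

variable {E : Type*} [NormedAddCommGroup E] [NormedSpace ℝ E] {F G : E → Oct}

theorem contDiff_omul {n : WithTop ℕ∞} (hF : ContDiff ℝ n F) (hG : ContDiff ℝ n G) :
    ContDiff ℝ n (fun y => omul (F y) (G y)) :=
  omulL.isBoundedBilinearMap.contDiff.comp (hF.prodMk hG)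

variable {x : E}

theorem differentiableAt_omul (hF : DifferentiableAt ℝ F x) (hG : DifferentiableAt ℝ G x) :
    DifferentiableAt ℝ (fun y => omul (F y) (G y)) x :=
  (omulL.hasFDerivAt_of_bilinear hF.hasFDerivAt hG.hasFDerivAt).differentiableAt

theorem fderiv_omul_apply (hF : DifferentiableAt ℝ F x) (hG : DifferentiableAt ℝ G x) (w : E) :
    fderiv ℝ (fun y => omul (F y) (G y)) x w
      = omul (fderiv ℝ F x w) (G x) + omul (F x) (fderiv ℝ G x w) := by
  rw [add_comm]
  exact congrArg (· w) (omulL.fderiv_of_bilinear hF hG)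

end OctonionCalculus

section CompactSupport

theorem integrable_smul_of_hasCompactSupport {X G : Type*} [TopologicalSpace X] [MeasurableSpace X]
    [OpensMeasurableSpace X] [NormedAddCommGroup G] [NormedSpace ℝ G] {μ : Measure X}
    [IsFiniteMeasureOnCompacts μ] {f : X → ℝ} {g : X → G} (hf : Continuous f) (hg : Continuous g)
    (hfg : HasCompactSupport f ∨ HasCompactSupport g) : Integrable (fun x => f x • g x) μ :=
  (hf.smul hg).integrable_of_hasCompactSupport <|
    hfg.elim HasCompactSupport.smul_right HasCompactSupport.smul_left

variable {E G : Type*} [NormedAddCommGroup E] [NormedSpace ℝ E] [MeasurableSpace E]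
  [NormedAddCommGroup G] [NormedSpace ℝ G] {μ : Measure E} {f : E → ℝ} {g : E → G}

theorem integrable_fderiv_smul_of_hasCompactSupport [OpensMeasurableSpace E]
    [IsFiniteMeasureOnCompacts μ] (hf : ContDiff ℝ 1 f) (hg : Continuous g)
    (hfg : HasCompactSupport f ∨ HasCompactSupport g) (w : E) :
    Integrable (fun x => fderiv ℝ f x w • g x) μ :=
  integrable_smul_of_hasCompactSupport
    ((hf.continuous_fderiv one_ne_zero).clm_apply continuous_const) hg
    (hfg.imp_left fun h => h.fderiv_apply ℝ w)

theorem integrable_smul_fderiv_of_hasCompactSupport [OpensMeasurableSpace E]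
    [IsFiniteMeasureOnCompacts μ] (hf : Continuous f) (hg : ContDiff ℝ 1 g)
    (hfg : HasCompactSupport f ∨ HasCompactSupport g) (w : E) :
    Integrable (fun x => f x • fderiv ℝ g x w) μ :=
  integrable_smul_of_hasCompactSupport hf
    ((hg.continuous_fderiv one_ne_zero).clm_apply continuous_const)
    (hfg.imp_right fun h => h.fderiv_apply ℝ w)

theorem integral_fderiv_smul_eq_neg_of_hasCompactSupport [BorelSpace E]
    [FiniteDimensional ℝ E] [μ.IsAddHaarMeasure] (hf : ContDiff ℝ 1 f) (hg : ContDiff ℝ 1 g)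
    (hfg : HasCompactSupport f ∨ HasCompactSupport g) (w : E) :
    ∫ x, fderiv ℝ f x w • g x ∂μ = -∫ x, f x • fderiv ℝ g x w ∂μ := by
  rw [integral_smul_fderiv_eq_neg_fderiv_smul_of_integrable
    (integrable_fderiv_smul_of_hasCompactSupport hf hg.continuous hfg w)
    (integrable_smul_fderiv_of_hasCompactSupport hf.continuous hg hfg w)
    (integrable_smul_of_hasCompactSupport hf.continuous hg.continuous hfg)
    (fun x _ => hf.differentiable one_ne_zero x) (fun x _ => hg.differentiable one_ne_zero x),
    neg_neg]

end CompactSupport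

theorem integral_sum_sum_clm_comp {α ι κ E G : Type*} [MeasurableSpace α] {μ : Measure α}
    [Fintype ι] [Fintype κ] [NormedAddCommGroup E] [NormedSpace ℝ E] [CompleteSpace E]
    [NormedAddCommGroup G] [NormedSpace ℝ G] [CompleteSpace G]
    (φ : κ → E →L[ℝ] G) {h : ι → κ → α → E} (hh : ∀ i p, Integrable (h i p) μ) :
    ∫ x, ∑ i, ∑ p, φ p (h i p x) ∂μ = ∑ i, ∑ p, φ p (∫ x, h i p x ∂μ) := by
  have hφ (i : ι) (p : κ) : Integrable (fun x => φ p (h i p x)) μ := (φ p).integrable_comp (hh i p)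
  rw [integral_finsetSum _ fun i _ => integrable_finsetSum _ fun p _ => hφ i p]
  refine Finset.sum_congr rfl fun i _ => ?_
  rw [integral_finsetSum _ fun p _ => hφ i p]
  exact Finset.sum_congr rfl fun p _ => (φ p).integral_comp_comm (hh i p)

section PartialDerivatives

variable {g : Pt → ℝ} {m n : WithTop ℕ∞}

theorem contDiff_pd (hg : ContDiff ℝ n g) (hmn : m + 1 ≤ n) (i : Fin 2) (p : Fin 8) :
    ContDiff ℝ m (pd i p g) :=
  (hg.fderiv_right hmn).clm_apply contDiff_const

theorem contDiff_pd_pd (hg : ContDiff ℝ n g) (hmn : m + 2 ≤ n) (i j : Fin 2) (p q : Fin 8) :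
    ContDiff ℝ m (pd i p (pd j q g)) :=
  contDiff_pd (contDiff_pd hg (by rwa [add_assoc, one_add_one_eq_two]) j q) le_rfl i p

theorem contDiff_dbar (hg : ContDiff ℝ n g) (hmn : m + 1 ≤ n) (i : Fin 2) :
    ContDiff ℝ m (dbar i g) :=
  ContDiff.sum fun p _ => (contDiff_pd hg hmn i p).smul contDiff_const

theorem contDiff_hessEntry (hg : ContDiff ℝ n g) (hmn : m + 2 ≤ n) (i j : Fin 2) :
    ContDiff ℝ m (hessEntry g i j) :=
  ContDiff.sum fun p _ => ContDiff.sum fun q _ =>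
    (contDiff_pd_pd hg hmn i j p q).smul contDiff_const

theorem tsupport_pd_subset (g : Pt → ℝ) (i : Fin 2) (p : Fin 8) :
    tsupport (pd i p g) ⊆ tsupport g :=
  tsupport_fderiv_apply_subset ℝ _

theorem hasCompactSupport_dbar (hg : HasCompactSupport g) (i : Fin 2) :
    HasCompactSupport (dbar i g) := by
  refine HasCompactSupport.intro hg fun x hx => Finset.sum_eq_zero fun p _ => ?_
  rw [image_eq_zero_of_notMem_tsupport (mt (@tsupport_pd_subset g i p x) hx), zero_smul]

theorem hasCompactSupport_hessEntry (hg : HasCompactSupport g) (i j : Fin 2) :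
    HasCompactSupport (hessEntry g i j) := by
  refine HasCompactSupport.intro hg fun x hx =>
    Finset.sum_eq_zero fun p _ => Finset.sum_eq_zero fun q _ => ?_
  have hsub : tsupport (pd i p (pd j q g)) ⊆ tsupport g :=
    (tsupport_pd_subset _ i p).trans (tsupport_pd_subset g j q)
  rw [image_eq_zero_of_notMem_tsupport (mt (@hsub x) hx), zero_smul]

theorem pd_comm (hg : ContDiff ℝ 2 g) (i j : Fin 2) (p q : Fin 8) :
    pd i p (pd j q g) = pd j q (pd i p g) := by
  funext x
  have hdiff : DifferentiableAt ℝ (fderiv ℝ g) x :=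
    (hg.fderiv_right one_add_one_eq_two.le).differentiable one_ne_zero x
  have hsymm : IsSymmSndFDerivAt ℝ g x := hg.contDiffAt.isSymmSndFDerivAt (by simp)
  have hsnd (v w : Pt) : fderiv ℝ (fun y => fderiv ℝ g y v) x w = fderiv ℝ (fderiv ℝ g) x w v := by
    simp [fderiv_clm_apply hdiff (differentiableAt_const v)]
  exact (hsnd _ _).trans ((hsymm _ _).trans (hsnd _ _).symm)

theorem fderiv_dbar_apply_uvec (hg : ContDiff ℝ 2 g) (i j : Fin 2) (p : Fin 8) (x : Pt) :
    fderiv ℝ (dbar j g) x (uvec i p) = dbar j (pd i p g) x := by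
  have hdiff (q : Fin 8) : DifferentiableAt ℝ (pd j q g) x :=
    (contDiff_pd hg one_add_one_eq_two.le j q).differentiable one_ne_zero x
  unfold dbar
  rw [fderiv_fun_sum fun q _ => (hdiff q).smul_const _, sum_apply]
  refine Finset.sum_congr rfl fun q _ => ?_
  rw [fderiv_smul_const (hdiff q), pd_comm hg]
  rfl

theorem fderiv_hessEntry_apply_uvec (hg : ContDiff ℝ 3 g) (i j k : Fin 2) (r : Fin 8) (x : Pt) :
    fderiv ℝ (hessEntry g i j) x (uvec k r) = hessEntry (pd k r g) i j x := by
  have hdiff (p q : Fin 8) : DifferentiableAt ℝ (pd i p (pd j q g)) x :=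
    (contDiff_pd_pd (m := 1) hg (by norm_num) i j p q).differentiable one_ne_zero x
  have hcomm (p q : Fin 8) :
      pd k r (pd i p (pd j q g)) = pd i p (pd j q (pd k r g)) := by
    rw [pd_comm (contDiff_pd hg two_add_one_eq_three.le j q) k i,
      pd_comm (hg.of_le (by norm_num)) k j]
  unfold hessEntry
  rw [fderiv_fun_sum fun p _ => .fun_sum fun q _ => (hdiff p q).smul_const _, sum_apply]
  refine Finset.sum_congr rfl fun p _ => ?_
  rw [fderiv_fun_sum fun q _ => (hdiff p q).smul_const _, sum_apply]
  refine Finset.sum_congr rfl fun q _ => ?_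
  rw [fderiv_smul_const (hdiff p q), ← hcomm]
  rfl

end PartialDerivatives

section OctonionicHessian

variable {g : Pt → ℝ}

theorem hessEntry_self (hg : ContDiff ℝ 2 g) (i : Fin 2) (x : Pt) :
    hessEntry g i i x = lap i g x • e 0 :=
  sum_sum_smul_e_omul_oconj_e fun p q => by rw [pd_comm hg]

theorem oconj_hessEntry (hg : ContDiff ℝ 2 g) (i j : Fin 2) (x : Pt) :
    oconj (hessEntry g i j x) = hessEntry g j i x := by
  simp only [hessEntry, oconj_sum, oconj_smul, oconj_omul, oconj_oconj]
  rw [Finset.sum_comm]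
  simp only [pd_comm hg i j]

theorem sum_omul_dbar_oconj_e (g : Pt → ℝ) (i j : Fin 2) (x : Pt) :
    ∑ p, omul (dbar j (pd i p g) x) (oconj (e p)) = hessEntry g j i x := by
  simp only [dbar, sum_omul, smul_omul]
  exact Finset.sum_comm

/-- The conjugate Dirac operator `F ↦ Σ_p ē_p · ∂F/∂x_i^p` in the `i`-th octonionic variable. It
extends `dlow` to octonion-valued fields, with the derivative as right factor; its real part is the
divergence of `F` in the variables `x_i^0, …, x_i^7`. -/
def conjDirac (i : Fin 2) (F : Pt → Oct) (x : Pt) : Oct :=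
  ∑ p, omul (oconj (e p)) (fderiv ℝ F x (uvec i p))

theorem conjDirac_hessEntry (hg : ContDiff ℝ 3 g) (i j : Fin 2) (x : Pt) :
    conjDirac i (hessEntry g i j) x = ∑ q, lap i (pd j q g) x • oconj (e q) := by
  have hg' : ContDiff ℝ 2 g := hg.of_le (by norm_num)
  have hsymm (q p r : Fin 8) :
      pd i r (pd j q (pd i p g)) x = pd i p (pd i r (pd j q g)) x := by
    rw [pd_comm hg' j i, pd_comm (contDiff_pd hg two_add_one_eq_three.le j q)]
  calc conjDirac i (hessEntry g i j) x
      = ∑ q, ∑ p, ∑ r, pd i p (pd i r (pd j q g)) x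
          • omul (oconj (e p)) (omul (e r) (oconj (e q))) := by
        simp only [conjDirac, fderiv_hessEntry_apply_uvec hg, hessEntry, omul_sum, omul_smul, hsymm]
        exact (Finset.sum_congr rfl fun p _ => Finset.sum_comm).trans Finset.sum_comm
    _ = ∑ q, lap i (pd j q g) x • oconj (e q) :=
        Finset.sum_congr rfl fun q _ => sum_sum_smul_oconj_e_omul_e_omul
          (fun p r => by rw [pd_comm (contDiff_pd hg two_add_one_eq_three.le j q)]) _

theorem conjDirac_hessEntry_comm (hg : ContDiff ℝ 3 g) (i j : Fin 2) (x : Pt) :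
    conjDirac i (hessEntry g i j) x = conjDirac j (hessEntry g i i) x := by
  rw [conjDirac_hessEntry hg]
  simp only [conjDirac, fderiv_hessEntry_apply_uvec hg,
    hessEntry_self (contDiff_pd hg two_add_one_eq_three.le _ _), omul_smul, omul_e_zero]

theorem oRe_conjDirac_omul_dbar {F : Pt → Oct} {x : Pt} (hF : DifferentiableAt ℝ F x)
    (hg : ContDiff ℝ 2 g) (i j : Fin 2) :
    oRe (conjDirac i (fun y => omul (F y) (dbar j g y)) x)
      = oRe (omul (conjDirac i F x) (dbar j g x)) + oRe (omul (F x) (hessEntry g j i x)) := by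
  have hdbar : DifferentiableAt ℝ (dbar j g) x :=
    (contDiff_dbar hg one_add_one_eq_two.le j).differentiable one_ne_zero x
  rw [← sum_omul_dbar_oconj_e]
  simp only [conjDirac, fderiv_omul_apply hF hdbar, fderiv_dbar_apply_uvec hg, oRe_sum, sum_omul,
    omul_sum, ← Finset.sum_add_distrib]
  refine Finset.sum_congr rfl fun p _ => ?_
  rw [omul_add, oRe_add, oRe_omul_assoc, oRe_omul_comm (oconj (e p)) (omul (F x) _), oRe_omul_assoc]

theorem conjDirac_sub {F G : Pt → Oct} {x : Pt} (hF : DifferentiableAt ℝ F x)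
    (hG : DifferentiableAt ℝ G x) (i : Fin 2) :
    conjDirac i (fun y => F y - G y) x = conjDirac i F x - conjDirac i G x := by
  simp only [conjDirac, fderiv_fun_sub hF hG, sub_apply, omul_sub, Finset.sum_sub_distrib]

end OctonionicHessian

section CofactorField

variable {u v : Pt → ℝ}

/-- The octonion-valued field `v_{j̄j}·u_ī - v_{īj}·u_j̄`. For `(i, j) = (0, 1)` and `(1, 0)` these
are the two entries of the product of the cofactor matrix of `Hess_𝕆(v)` with the octonionic
gradient of `u`. -/
def cofactorField (u v : Pt → ℝ) (i j : Fin 2) (x : Pt) : Oct :=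
  omul (hessEntry v j j x) (dbar i u x) - omul (hessEntry v i j x) (dbar j u x)

theorem contDiff_cofactorField {k m n : WithTop ℕ∞} (hu : ContDiff ℝ m u) (hv : ContDiff ℝ n v)
    (hkm : k + 1 ≤ m) (hkn : k + 2 ≤ n) (i j : Fin 2) : ContDiff ℝ k (cofactorField u v i j) :=
  (contDiff_omul (contDiff_hessEntry hv hkn j j) (contDiff_dbar hu hkm i)).sub
    (contDiff_omul (contDiff_hessEntry hv hkn i j) (contDiff_dbar hu hkm j))

theorem hasCompactSupport_cofactorField (huv : HasCompactSupport u ∨ HasCompactSupport v)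
    (i j : Fin 2) : HasCompactSupport (cofactorField u v i j) := by
  have homul (k l m : Fin 2) :
      HasCompactSupport (fun x => omul (hessEntry v k l x) (dbar m u x)) :=
    hasCompactSupport_omul <| huv.symm.imp (hasCompactSupport_hessEntry · k l)
      (hasCompactSupport_dbar · m)
  exact (homul j j i).sub (homul i j j)

theorem oRe_conjDirac_cofactorField (hu : ContDiff ℝ 2 u) (hv : ContDiff ℝ 3 v) (i j : Fin 2)
    (x : Pt) :
    oRe (conjDirac i (cofactorField u v i j) x)
      = oRe (omul (conjDirac i (hessEntry v j j) x) (dbar i u x))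
        - oRe (omul (conjDirac j (hessEntry v i i) x) (dbar j u x))
        + (oRe (omul (hessEntry v j j x) (hessEntry u i i x))
        - oRe (omul (hessEntry v i j x) (hessEntry u j i x))) := by
  have hdbar (k : Fin 2) : DifferentiableAt ℝ (dbar k u) x :=
    (contDiff_dbar hu one_add_one_eq_two.le k).differentiable one_ne_zero x
  have hhess (k l : Fin 2) : DifferentiableAt ℝ (hessEntry v k l) x :=
    (contDiff_hessEntry (m := 1) hv (by norm_num) k l).differentiable one_ne_zero x
  unfold cofactorField
  rw [conjDirac_sub (differentiableAt_omul (hhess j j) (hdbar i))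
      (differentiableAt_omul (hhess i j) (hdbar j)), oRe_sub,
    oRe_conjDirac_omul_dbar (hhess j j) hu, oRe_conjDirac_omul_dbar (hhess i j) hu,
    conjDirac_hessEntry_comm hv i j]
  ring

theorem mdetHess_eq_lap (hu : ContDiff ℝ 2 u) (hv : ContDiff ℝ 2 v) (x : Pt) :
    mdetHess u v x = 1 / 2 * (lap 0 u x * lap 1 v x + lap 0 v x * lap 1 u x
      - 2 * oRe (omul (hessEntry u 0 1 x) (hessEntry v 1 0 x))) := by
  simp only [mdetHess, hessEntry_self hu, hessEntry_self hv, oRe_smul, oRe_e_zero, mul_one,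
    oconj_hessEntry hv]

theorem oRe_omul_hessEntry_swap (hu : ContDiff ℝ 2 u) (hv : ContDiff ℝ 2 v) (i j : Fin 2) (x : Pt) :
    oRe (omul (hessEntry v i j x) (hessEntry u j i x))
      = oRe (omul (hessEntry u i j x) (hessEntry v j i x)) := by
  rw [← oRe_oconj, oconj_omul, oconj_hessEntry hu, oconj_hessEntry hv]

theorem sum_oRe_conjDirac_cofactorField (hu : ContDiff ℝ 2 u) (hv : ContDiff ℝ 3 v) (x : Pt) :
    ∑ i, oRe (conjDirac i (cofactorField u v i (1 - i)) x) = 2 * mdetHess u v x := by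
  have hv' : ContDiff ℝ 2 v := hv.of_le (by norm_num)
  have hdiag (i j : Fin 2) :
      oRe (omul (hessEntry v j j x) (hessEntry u i i x)) = lap i u x * lap j v x := by
    simp only [hessEntry_self hu, hessEntry_self hv', omul_smul, omul_e_zero, oRe_smul, oRe_e_zero,
      mul_one]
  simp only [oRe_conjDirac_cofactorField hu hv, hdiag, Fin.sum_univ_two, sub_zero, sub_self]
  rw [mdetHess_eq_lap hu hv', oRe_omul_hessEntry_swap hu hv' 0 1,
    oRe_omul_comm (hessEntry v 1 0 x)]
  ring

theorem sum_oRe_dlow_omul_cofactorField (u v f : Pt → ℝ) (x : Pt) :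
    ∑ i, oRe (omul (dlow i f x) (cofactorField u v i (1 - i) x))
      = oRe (omul (dlow 0 f x) (omul (hessEntry v 1 1 x) (dbar 0 u x))
          - omul (dlow 0 f x) (omul (hessEntry v 0 1 x) (dbar 1 u x))
          - omul (dlow 1 f x) (omul (hessEntry v 1 0 x) (dbar 0 u x))
          + omul (dlow 1 f x) (omul (hessEntry v 0 0 x) (dbar 1 u x))) := by
  simp only [cofactorField, Fin.sum_univ_two, sub_zero, sub_self, omul_sub, oRe_sub, oRe_add]
  ring

end CofactorField

theorem integral_sum_oRe_dlow_omul {f : Pt → ℝ} {F : Fin 2 → Pt → Oct} (hf : ContDiff ℝ 1 f)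
    (hF : ∀ i, ContDiff ℝ 1 (F i))
    (hfF : HasCompactSupport f ∨ ∀ i, HasCompactSupport (F i)) :
    ∫ x, ∑ i, oRe (omul (dlow i f x) (F i x)) = -∫ x, f x * ∑ i, oRe (conjDirac i (F i) x) := by
  let φ (p : Fin 8) : Oct →L[ℝ] ℝ := oReL.comp (omulL (oconj (e p)))
  have hsupp (i : Fin 2) : HasCompactSupport f ∨ HasCompactSupport (F i) := hfF.imp_right (· i)
  have hint (i : Fin 2) (p : Fin 8) : Integrable fun x => pd i p f x • F i x :=
    integrable_fderiv_smul_of_hasCompactSupport hf (hF i).continuous (hsupp i) (uvec i p)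
  have hint' (i : Fin 2) (p : Fin 8) : Integrable fun x => f x • fderiv ℝ (F i) x (uvec i p) :=
    integrable_smul_fderiv_of_hasCompactSupport hf.continuous (hF i) (hsupp i) (uvec i p)
  calc ∫ x, ∑ i, oRe (omul (dlow i f x) (F i x))
      = ∫ x, ∑ i, ∑ p, φ p (pd i p f x • F i x) := by
        simp only [dlow, sum_omul, smul_omul, oRe_sum, oRe_smul, map_smul, smul_eq_mul]
        rfl
    _ = ∑ i, ∑ p, φ p (∫ x, pd i p f x • F i x) := integral_sum_sum_clm_comp φ hint
    _ = -∑ i, ∑ p, φ p (∫ x, f x • fderiv ℝ (F i) x (uvec i p)) := by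
        simp only [← Finset.sum_neg_distrib, ← map_neg]
        exact Finset.sum_congr rfl fun i _ => Finset.sum_congr rfl fun p _ => congrArg (φ p) <|
          integral_fderiv_smul_eq_neg_of_hasCompactSupport hf (hF i) (hsupp i) (uvec i p)
    _ = -∫ x, ∑ i, ∑ p, φ p (f x • fderiv ℝ (F i) x (uvec i p)) :=
        congrArg Neg.neg (integral_sum_sum_clm_comp φ hint').symm
    _ = -∫ x, f x * ∑ i, oRe (conjDirac i (F i) x) := by
        simp only [conjDirac, oRe_sum, Finset.mul_sum, map_smul, smul_eq_mul]
        rfl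

theorem integration_by_parts_general (u v f : Pt → ℝ)
    (hu : ContDiff ℝ 2 u) (hv : ContDiff ℝ 3 v) (hf : ContDiff ℝ 1 f)
    (hsupp : HasCompactSupport u ∨ HasCompactSupport v ∨ HasCompactSupport f) :
    ∫ x, mdetHess u v x * f x
      = -(1 / 2) * ∫ x, oRe
          (omul (dlow 0 f x) (omul (hessEntry v 1 1 x) (dbar 0 u x))
          - omul (dlow 0 f x) (omul (hessEntry v 0 1 x) (dbar 1 u x))
          - omul (dlow 1 f x) (omul (hessEntry v 1 0 x) (dbar 0 u x))
          + omul (dlow 1 f x) (omul (hessEntry v 0 0 x) (dbar 1 u x))) := by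
  let W (i : Fin 2) : Pt → Oct := cofactorField u v i (1 - i)
  have hW (i : Fin 2) : ContDiff ℝ 1 (W i) :=
    contDiff_cofactorField hu hv one_add_one_eq_two.le (by norm_num) i (1 - i)
  have hfW : HasCompactSupport f ∨ ∀ i, HasCompactSupport (W i) :=
    (or_assoc.mpr hsupp).symm.imp_right fun huv i => hasCompactSupport_cofactorField huv i (1 - i)
  have hdiv (x : Pt) : mdetHess u v x * f x = 1 / 2 * (f x * ∑ i, oRe (conjDirac i (W i) x)) := by
    rw [sum_oRe_conjDirac_cofactorField hu hv]; ring
  simp only [hdiv, ← sum_oRe_dlow_omul_cofactorField]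
  rw [integral_const_mul, integral_sum_oRe_dlow_omul hf hW hfW, neg_mul_neg]

/-- Proposition 10.3 (integration by parts in 𝕆²): for smooth u, v, f : ℝ¹⁶ → ℝ with
one of them compactly supported,
∫ det(Hess_𝕆 u, Hess_𝕆 v)·f = −(1/2)∫ Re(f₁(v_{2̄2}u_{1̄}) − f₁(v_{1̄2}u_{2̄})
− f₂(v_{2̄1}u_{1̄}) + f₂(v_{1̄1}u_{2̄})). -/
theorem integration_by_parts (u v f : Pt → ℝ)
    (hu : ContDiff ℝ (⊤ : ℕ∞) u) (hv : ContDiff ℝ (⊤ : ℕ∞) v) (hf : ContDiff ℝ (⊤ : ℕ∞) f)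
    (hsupp : HasCompactSupport u ∨ HasCompactSupport v ∨ HasCompactSupport f) :
    ∫ x, mdetHess u v x * f x
      = -(1 / 2) * ∫ x, oRe
          (omul (dlow 0 f x) (omul (hessEntry v 1 1 x) (dbar 0 u x))
          - omul (dlow 0 f x) (omul (hessEntry v 0 1 x) (dbar 1 u x))
          - omul (dlow 1 f x) (omul (hessEntry v 1 0 x) (dbar 0 u x))
          + omul (dlow 1 f x) (omul (hessEntry v 0 0 x) (dbar 1 u x))) :=
  integration_by_parts_general u v f (contDiff_infty.1 hu 2) (contDiff_infty.1 hv 3)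
    (contDiff_infty.1 hf 1) hsupp
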